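/- Let T be a tensorly faithful Wakamatsu tilting (S,R)-bimodule and M a right R-module of finite Gorenstein injective dimension. If either the projective dimension of T as a right R-module is finite, or the injective dimension of T as a right R-module is finite, then M belongs to the Bass class ℬ_T(R). -/

import Mathlib

open Function MulOpposite

universe u

noncomputable section

/-! ## Chain conditions -/

/-- A ring is right coherent if every finitely generated right ideal is finitely presented. -/
def IsRightCoherentRing (R : Type u) [Ring R] : Prop :=
  ∀ I : Submodule Rᵐᵒᵖ R, I.FG → Module.FinitePresentation Rᵐᵒᵖ I

/-- A ring is left coherent if every finitely generated left ideal is finitely presented. -/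
def IsLeftCoherentRing (S : Type u) [Ring S] : Prop :=
  ∀ I : Submodule S S, I.FG → Module.FinitePresentation S I

/-- A ring is right Noetherian if every right ideal is finitely generated. -/
def IsRightNoetherianRing (R : Type u) [Ring R] : Prop :=
  ∀ I : Submodule Rᵐᵒᵖ R, I.FG

/-! ## The tensor product `N ⊗_S T` of a right `S`-module `N` with a left `S`-module `T` -/

section MTensor

variable (S : Type u) [Ring S]
variable (N : Type u) [AddCommGroup N] [Module Sᵐᵒᵖ N]
variable (T : Type u) [AddCommGroup T] [Module S T]

/-- The subgroup of balancing relations defining `N ⊗_S T` as a quotient of `T ⊗_ℤ N`. -/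
def mtRel : AddSubgroup (TensorProduct ℤ T N) :=
  AddSubgroup.closure
    {x | ∃ (s : S) (t : T) (n : N), x = (s • t) ⊗ₜ[ℤ] n - t ⊗ₜ[ℤ] (op s • n)}

/-- `MTensor S N T` is the tensor product `N ⊗_S T` of a right `S`-module `N` with a left
`S`-module `T`, realized as a quotient of `T ⊗_ℤ N`. -/
def MTensor : Type u := TensorProduct ℤ T N ⧸ mtRel S N T

instance : AddCommGroup (MTensor S N T) :=
  inferInstanceAs (AddCommGroup (TensorProduct ℤ T N ⧸ mtRel S N T))

variable {S N T}

/-- `MTensor.mk n t` is the element `n ⊗ t` of `N ⊗_S T`. -/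
def MTensor.mk (n : N) (t : T) : MTensor S N T := QuotientAddGroup.mk (t ⊗ₜ[ℤ] n)

section Map

variable {N' : Type u} [AddCommGroup N'] [Module Sᵐᵒᵖ N']

/-- Functoriality of `N ⊗_S T` in the right `S`-module variable `N`. -/
def MTensor.map (g : N →ₗ[Sᵐᵒᵖ] N') : MTensor S N T →+ MTensor S N' T :=
  QuotientAddGroup.map _ _
    (LinearMap.lTensor T g.toAddMonoidHom.toIntLinearMap).toAddMonoidHom
    (by
      refine (AddSubgroup.closure_le _).2 ?_
      rintro x ⟨s, t, n, rfl⟩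
      simp only [SetLike.mem_coe, AddSubgroup.mem_comap, LinearMap.toAddMonoidHom_coe,
        map_sub, LinearMap.lTensor_tmul, AddMonoidHom.coe_toIntLinearMap,
        LinearMap.toAddMonoidHom_coe, map_smul]
      exact AddSubgroup.subset_closure ⟨s, t, g n, rfl⟩)

end Map

section LMap

variable {T' : Type u} [AddCommGroup T'] [Module S T']

/-- Functoriality of `N ⊗_S T` in the left `S`-module variable `T`. -/
def MTensor.lmap (h : T →ₗ[S] T') : MTensor S N T →+ MTensor S N T' :=
  QuotientAddGroup.map _ _
    (LinearMap.rTensor N h.toAddMonoidHom.toIntLinearMap).toAddMonoidHom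
    (by
      refine (AddSubgroup.closure_le _).2 ?_
      rintro x ⟨s, t, n, rfl⟩
      simp only [SetLike.mem_coe, AddSubgroup.mem_comap, LinearMap.toAddMonoidHom_coe,
        map_sub, LinearMap.rTensor_tmul, AddMonoidHom.coe_toIntLinearMap, map_smul]
      exact AddSubgroup.subset_closure ⟨s, h t, n, rfl⟩)

end LMap

section Bimod

variable (R : Type u) [Ring R] [Module Rᵐᵒᵖ T] [SMulCommClass S Rᵐᵒᵖ T]

instance MTensor.instSMul : SMul Rᵐᵒᵖ (MTensor S N T) :=
  ⟨fun ρ =>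
    QuotientAddGroup.map _ _ (DistribMulAction.toAddMonoidHom (TensorProduct ℤ T N) ρ)
      (by
        refine (AddSubgroup.closure_le _).2 ?_
        rintro x ⟨s, t, n, rfl⟩
        simp only [SetLike.mem_coe, AddSubgroup.mem_comap,
          DistribMulAction.toAddMonoidHom_apply, smul_sub, TensorProduct.smul_tmul']
        exact AddSubgroup.subset_closure ⟨s, ρ • t, n, by rw [smul_comm s ρ t]⟩)⟩

instance MTensor.instModule : Module Rᵐᵒᵖ (MTensor S N T) :=
  Function.Surjective.module Rᵐᵒᵖ (QuotientAddGroup.mk' (mtRel S N T))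
    (QuotientAddGroup.mk'_surjective _) (fun _ _ => rfl)

theorem MTensor.smul_mk (ρ : Rᵐᵒᵖ) (n : N) (t : T) :
    ρ • (MTensor.mk n t : MTensor S N T) = MTensor.mk n (ρ • t) := by
  show QuotientAddGroup.mk (ρ • (t ⊗ₜ[ℤ] n)) = QuotientAddGroup.mk ((ρ • t) ⊗ₜ[ℤ] n)
  rw [TensorProduct.smul_tmul']

theorem MTensor.mk_add_right (n : N) (t t' : T) :
    (MTensor.mk n (t + t') : MTensor S N T) = MTensor.mk n t + MTensor.mk n t' := by
  show QuotientAddGroup.mk _ = _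
  rw [TensorProduct.add_tmul]
  rfl

/-- The natural map `θ_N : N → Hom_R(T, N ⊗_S T)`, `n ↦ (t ↦ n ⊗ t)`. -/
def MTensor.theta (n : N) : T →ₗ[Rᵐᵒᵖ] MTensor S N T where
  toFun t := MTensor.mk n t
  map_add' t t' := MTensor.mk_add_right n t t'
  map_smul' ρ t := (MTensor.smul_mk R ρ n t).symm

variable (S T N) in
/-- The natural map `θ_N : N → Hom_R(T, N ⊗_S T)` as a function. -/
def MTensor.thetaFun : N → (T →ₗ[Rᵐᵒᵖ] MTensor S N T) := fun n => MTensor.theta R n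

end Bimod

end MTensor

/-! ## The right `S`-module structure on `Hom_A(T, M)` induced by a left `S`-action on `T` -/

section HomModule

variable {B A : Type u} [Ring B] [Ring A]
variable {T : Type u} [AddCommGroup T] [Module A T] [Module B T] [SMulCommClass B A T]
variable {M : Type u} [AddCommGroup M] [Module A M]

instance homDomSMul : SMul Bᵐᵒᵖ (T →ₗ[A] M) :=
  ⟨fun b f =>
    { toFun := fun t => f (b.unop • t)
      map_add' := fun t t' => by
        show f (b.unop • (t + t')) = f (b.unop • t) + f (b.unop • t')
        rw [smul_add, map_add]
      map_smul' := fun a t => by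
        show f (b.unop • a • t) = a • f (b.unop • t)
        rw [smul_comm b.unop a t, map_smul] }⟩

@[simp] theorem homDomSMul_apply (b : Bᵐᵒᵖ) (f : T →ₗ[A] M) (t : T) :
    (b • f) t = f (b.unop • t) := rfl

instance homDomModule : Module Bᵐᵒᵖ (T →ₗ[A] M) where
  one_smul f := LinearMap.ext fun t => by simp
  mul_smul b b' f := LinearMap.ext fun t => by simp [mul_smul]
  smul_zero b := LinearMap.ext fun t => rfl
  smul_add b f g := LinearMap.ext fun t => rfl
  add_smul b b' f := LinearMap.ext fun t => by simp [add_smul]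
  zero_smul f := LinearMap.ext fun t => by simp

end HomModule

/-! ## The evaluation map `ν_M : Hom_R(T, M) ⊗_S T → M` -/

section Nu

variable (S R : Type u) [Ring S] [Ring R]
variable (T : Type u) [AddCommGroup T] [Module S T] [Module Rᵐᵒᵖ T] [SMulCommClass S Rᵐᵒᵖ T]
variable (M : Type u) [AddCommGroup M] [Module Rᵐᵒᵖ M]

/-- The evaluation map `ν_M : Hom_R(T, M) ⊗_S T → M`, `f ⊗ t ↦ f t`. -/
def MTensor.nuFun : MTensor S (T →ₗ[Rᵐᵒᵖ] M) T →+ M :=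
  QuotientAddGroup.lift _
    (TensorProduct.liftAddHom
      { toFun := fun t =>
          { toFun := fun f : T →ₗ[Rᵐᵒᵖ] M => f t
            map_zero' := rfl
            map_add' := fun f g => rfl }
        map_zero' := AddMonoidHom.ext fun f => f.map_zero
        map_add' := fun t t' => AddMonoidHom.ext fun f => f.map_add t t' }
      (fun z t f => by
        show f (z • t) = (z • f) t
        rw [map_zsmul, LinearMap.smul_apply]))
    (by
      refine (AddSubgroup.closure_le _).2 ?_
      rintro x ⟨s, t, f, rfl⟩
      simp only [SetLike.mem_coe, AddMonoidHom.mem_ker, map_sub,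
        TensorProduct.liftAddHom_tmul, AddMonoidHom.coe_mk, ZeroHom.coe_mk]
      show f (s • t) - (op s • f) t = 0
      rw [homDomSMul_apply]
      simp)

end Nu


/-! ## Resolutions and derived-functor vanishing -/

/-- The data of a nonnegatively graded chain complex `⋯ → P 1 → P 0 → X` of `A`-modules. -/
structure ResolutionData (A : Type u) [Ring A] (X : Type u) [AddCommGroup X] [Module A X] :
    Type (u + 1) where
  P : ℕ → Type u
  [instAdd : ∀ n, AddCommGroup (P n)]
  [instMod : ∀ n, Module A (P n)]
  d : ∀ n, P (n + 1) →ₗ[A] P n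
  ε : P 0 →ₗ[A] X

attribute [instance] ResolutionData.instAdd ResolutionData.instMod

/-- The property of being a projective resolution. -/
structure ResolutionData.IsProjResolution {A : Type u} [Ring A] {X : Type u} [AddCommGroup X]
    [Module A X] (Q : ResolutionData A X) : Prop where
  proj : ∀ n, Module.Projective A (Q.P n)
  surj : Function.Surjective Q.ε
  exact0 : Function.Exact (Q.d 0) Q.ε
  exactSucc : ∀ n, Function.Exact (Q.d (n + 1)) (Q.d n)

/-- `X` has a resolution by finitely generated projective `A`-modules. -/
def HasFGProjResolution (A : Type u) [Ring A] (X : Type u) [AddCommGroup X] [Module A X] : Prop :=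
  ∃ Q : ResolutionData A X, Q.IsProjResolution ∧ ∀ n, Module.Finite A (Q.P n)

/-- `Ext^i_A(X, Y) = 0` for all `i ≥ 1`: some (equivalently, any) projective resolution of `X`
has `Hom_A(-, Y)`-complex exact at all positive degrees. -/
def ExtVanishAll (A : Type u) [Ring A] (X Y : Type u) [AddCommGroup X] [Module A X]
    [AddCommGroup Y] [Module A Y] : Prop :=
  ∃ Q : ResolutionData A X, Q.IsProjResolution ∧
    ∀ j : ℕ, Function.Exact
      (fun f : Q.P j →ₗ[A] Y => f.comp (Q.d j))
      (fun f : Q.P (j + 1) →ₗ[A] Y => f.comp (Q.d (j + 1)))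

/-- `Ext^1_A(X, Y) = 0`: every short exact sequence `0 → Y → E → X → 0` splits. -/
def Ext1Vanishes (A : Type u) [Ring A] (X Y : Type u) [AddCommGroup X] [Module A X]
    [AddCommGroup Y] [Module A Y] : Prop :=
  ∀ (E : Type u) [AddCommGroup E] [Module A E] (i : Y →ₗ[A] E) (p : E →ₗ[A] X),
    Function.Injective i → Function.Surjective p → Function.Exact i p →
      ∃ s : X →ₗ[A] E, p.comp s = LinearMap.id

/-- `Tor^S_i(N, T) = 0` for all `i ≥ 1`: some (equivalently, any) projective resolution of the
right `S`-module `N` stays exact in positive degrees after applying `- ⊗_S T`. -/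
def TorVanishAll (S : Type u) [Ring S] (N : Type u) [AddCommGroup N] [Module Sᵐᵒᵖ N]
    (T : Type u) [AddCommGroup T] [Module S T] : Prop :=
  ∃ Q : ResolutionData Sᵐᵒᵖ N, Q.IsProjResolution ∧
    ∀ j : ℕ, Function.Exact
      (⇑(MTensor.map (T := T) (Q.d (j + 1))))
      (⇑(MTensor.map (T := T) (Q.d j)))

/-! ## Homological dimensions -/

/-- A surjection onto `M` from some module. -/
structure EpiOnto (A : Type u) [Ring A] (M : ModuleCat.{u} A) : Type (u + 1) where
  P : ModuleCat.{u} A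
  f : P →ₗ[A] M
  surj : Function.Surjective f

/-- An injection of `M` into some module. -/
structure MonoInto (A : Type u) [Ring A] (M : ModuleCat.{u} A) : Type (u + 1) where
  E : ModuleCat.{u} A
  f : M →ₗ[A] E
  inj : Function.Injective f

/-- `HasClassResolution A 𝒞 n M` says that there is an exact sequence
`0 → C_n → ⋯ → C_0 → M → 0` with all `C_i` in the class `𝒞`. -/
def HasClassResolution (A : Type u) [Ring A] (C : ModuleCat.{u} A → Prop) :
    ℕ → ModuleCat.{u} A → Prop
  | 0, M => C M
  | n + 1, M => ∃ e : EpiOnto A M, C e.P ∧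
      HasClassResolution A C n (ModuleCat.of A (LinearMap.ker e.f))

/-- `HasClassCoresolution A 𝒞 n M` says that there is an exact sequence
`0 → M → C^0 → ⋯ → C^n → 0` with all `C^i` in the class `𝒞`. -/
def HasClassCoresolution (A : Type u) [Ring A] (C : ModuleCat.{u} A → Prop) :
    ℕ → ModuleCat.{u} A → Prop
  | 0, M => C M
  | n + 1, M => ∃ m : MonoInto A M, C m.E ∧
      HasClassCoresolution A C n (ModuleCat.of A ((↥m.E) ⧸ LinearMap.range m.f))

/-- The projective dimension of `M` is at most `n`. -/
def ProjDimLE (A : Type u) [Ring A] (M : Type u) [AddCommGroup M] [Module A M] (n : ℕ) : Prop :=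
  HasClassResolution A (fun P => Module.Projective A P) n (ModuleCat.of A M)

/-- The injective dimension of `M` is at most `n`. -/
def InjDimLE (A : Type u) [Ring A] (M : Type u) [AddCommGroup M] [Module A M] (n : ℕ) : Prop :=
  HasClassCoresolution A (fun E => Module.Injective A E) n (ModuleCat.of A M)

/-- A right `S`-module `N` is flat if `N ⊗_S -` preserves injections of left `S`-modules. -/
def IsFlatRightModule (S : Type u) [Ring S] (N : Type u) [AddCommGroup N] [Module Sᵐᵒᵖ N] :
    Prop :=
  ∀ (X Y : Type u) [AddCommGroup X] [Module S X] [AddCommGroup Y] [Module S Y]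
    (g : X →ₗ[S] Y), Function.Injective g →
      Function.Injective (MTensor.lmap (N := N) g)

/-- The flat dimension of the right `S`-module `N` is at most `n`. -/
def FlatDimLE (S : Type u) [Ring S] (N : Type u) [AddCommGroup N] [Module Sᵐᵒᵖ N] (n : ℕ) :
    Prop :=
  HasClassResolution Sᵐᵒᵖ (fun P => IsFlatRightModule S P) n (ModuleCat.of Sᵐᵒᵖ N)

/-! ## Gorenstein homological algebra -/

/-- The data of a `ℤ`-indexed complex of `A`-modules. -/
structure ZComplex (A : Type u) [Ring A] : Type (u + 1) where
  P : ℤ → Type u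
  [instAdd : ∀ i, AddCommGroup (P i)]
  [instMod : ∀ i, Module A (P i)]
  d : ∀ i, P i →ₗ[A] P (i + 1)

attribute [instance] ZComplex.instAdd ZComplex.instMod

/-- Exactness of a `ℤ`-indexed complex. -/
def ZComplex.IsExact {A : Type u} [Ring A] (C : ZComplex A) : Prop :=
  ∀ i, Function.Exact (C.d i) (C.d (i + 1))

/-- A module is Gorenstein projective if it is a kernel of a totally acyclic complex of
projective modules. -/
def IsGorensteinProjective (A : Type u) [Ring A] (N : Type u) [AddCommGroup N] [Module A N] :
    Prop :=
  ∃ C : ZComplex A, (∀ i, Module.Projective A (C.P i)) ∧ C.IsExact ∧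
    (∀ (Q : Type u) [AddCommGroup Q] [Module A Q], Module.Projective A Q →
      ∀ i, Function.Exact
        (fun f : C.P (i + 1 + 1) →ₗ[A] Q => f.comp (C.d (i + 1)))
        (fun f : C.P (i + 1) →ₗ[A] Q => f.comp (C.d i))) ∧
    Nonempty (N ≃ₗ[A] LinearMap.ker (C.d 0))

/-- A module is Gorenstein injective if it is a kernel of a totally acyclic complex of
injective modules. -/
def IsGorensteinInjective (A : Type u) [Ring A] (M : Type u) [AddCommGroup M] [Module A M] :
    Prop :=
  ∃ C : ZComplex A, (∀ i, Module.Injective A (C.P i)) ∧ C.IsExact ∧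
    (∀ (I : Type u) [AddCommGroup I] [Module A I], Module.Injective A I →
      ∀ i, Function.Exact
        (fun f : I →ₗ[A] C.P i => (C.d i).comp f)
        (fun f : I →ₗ[A] C.P (i + 1) => (C.d (i + 1)).comp f)) ∧
    Nonempty (M ≃ₗ[A] LinearMap.ker (C.d 0))

/-- A right `S`-module is Gorenstein flat if it is a kernel of a complex of flat right
`S`-modules which stays exact after tensoring with any injective left `S`-module. -/
def IsGorensteinFlat (S : Type u) [Ring S] (N : Type u) [AddCommGroup N] [Module Sᵐᵒᵖ N] :
    Prop :=
  ∃ C : ZComplex Sᵐᵒᵖ, (∀ i, IsFlatRightModule S (C.P i)) ∧ C.IsExact ∧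
    (∀ (I : Type u) [AddCommGroup I] [Module S I], Module.Injective S I →
      ∀ i, Function.Exact
        (⇑(MTensor.map (T := I) (C.d i)))
        (⇑(MTensor.map (T := I) (C.d (i + 1))))) ∧
    Nonempty (N ≃ₗ[Sᵐᵒᵖ] LinearMap.ker (C.d 0))

/-- The Gorenstein projective dimension of `N` is at most `n`. -/
def GpdLE (A : Type u) [Ring A] (N : Type u) [AddCommGroup N] [Module A N] (n : ℕ) : Prop :=
  HasClassResolution A (fun P => IsGorensteinProjective A P) n (ModuleCat.of A N)

/-- The Gorenstein flat dimension of the right `S`-module `N` is at most `n`. -/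
def GfdLE (S : Type u) [Ring S] (N : Type u) [AddCommGroup N] [Module Sᵐᵒᵖ N] (n : ℕ) : Prop :=
  HasClassResolution Sᵐᵒᵖ (fun P => IsGorensteinFlat S P) n (ModuleCat.of Sᵐᵒᵖ N)

/-- The Gorenstein injective dimension of `M` is at most `n`. -/
def GidLE (A : Type u) [Ring A] (M : Type u) [AddCommGroup M] [Module A M] (n : ℕ) : Prop :=
  HasClassCoresolution A (fun E => IsGorensteinInjective A E) n (ModuleCat.of A M)

/-! ## Module classes `Prod(C)`, `Add(C)`, `add(C)` and (co)generators -/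

/-- `M` is a retract (equivalently, a direct summand up to isomorphism) of `P`. -/
def IsRetractOf (A : Type u) [Ring A] (M P : Type u) [AddCommGroup M] [Module A M]
    [AddCommGroup P] [Module A P] : Prop :=
  ∃ (f : M →ₗ[A] P) (g : P →ₗ[A] M), g.comp f = LinearMap.id

/-- `Prod(C)`: direct summands of direct products of copies of `C`. -/
def InProdClass (A : Type u) [Ring A] (C : Type u) [AddCommGroup C] [Module A C]
    (M : ModuleCat.{u} A) : Prop :=
  ∃ I : Type u, IsRetractOf A M (I → C)

/-- `Add(C)`: direct summands of direct sums of copies of `C`. -/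
def InAddClass (A : Type u) [Ring A] (C : Type u) [AddCommGroup C] [Module A C]
    (M : ModuleCat.{u} A) : Prop :=
  ∃ I : Type u, IsRetractOf A M (I →₀ C)

/-- `add(C)`: direct summands of finite direct sums of copies of `C`. -/
def InFinAddClass (A : Type u) [Ring A] (C : Type u) [AddCommGroup C] [Module A C]
    (M : ModuleCat.{u} A) : Prop :=
  ∃ k : ℕ, IsRetractOf A M (Fin k → C)

/-- `Q` is an injective cogenerator: `Q` is injective and every module embeds into a direct
product of copies of `Q`. -/
def IsInjectiveCogenerator (A : Type u) [Ring A] (Q : Type u) [AddCommGroup Q] [Module A Q] :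
    Prop :=
  Module.Injective A Q ∧
    ∀ (M : Type u) [AddCommGroup M] [Module A M],
      ∃ (I : Type u) (f : M →ₗ[A] (I → Q)), Function.Injective f

/-- `E` is the minimal injective cogenerator: it is an injective cogenerator which is a direct
summand of every injective cogenerator. -/
def IsMinimalInjectiveCogenerator (A : Type u) [Ring A] (E : Type u) [AddCommGroup E]
    [Module A E] : Prop :=
  IsInjectiveCogenerator A E ∧
    ∀ (Q : Type u) [AddCommGroup Q] [Module A Q],
      IsInjectiveCogenerator A Q → IsRetractOf A E Q

/-! ## Bimodules, homotheties, Wakamatsu tilting bimodules -/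

section Bimodules

variable (S R : Type u) [Ring S] [Ring R]
variable (T : Type u) [AddCommGroup T] [Module S T] [Module Rᵐᵒᵖ T] [SMulCommClass S Rᵐᵒᵖ T]

/-- The natural map `S → End(T_R)` given by the left `S`-action. -/
def leftHomothety : S → (T →ₗ[Rᵐᵒᵖ] T) := fun s =>
  { toFun := fun t => s • t
    map_add' := fun t t' => smul_add s t t'
    map_smul' := fun ρ t => smul_comm s ρ t }

/-- The natural map `R → End(_S T)` given by the right `R`-action. -/
def rightHomothety : R → (T →ₗ[S] T) := fun r =>
  { toFun := fun t => op r • t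
    map_add' := fun t t' => smul_add (op r) t t'
    map_smul' := fun s t => (smul_comm s (op r) t).symm }

/-- A Wakamatsu tilting `(S, R)`-bimodule: `T` admits resolutions by finitely generated
projectives on both sides, the natural maps `S → End(T_R)` and `R → End(_S T)` are
isomorphisms, and `Ext^i(T, T) = 0` on both sides for all `i ≥ 1`. -/
structure IsWakamatsuTilting : Prop where
  fgProjResR : HasFGProjResolution Rᵐᵒᵖ T
  fgProjResS : HasFGProjResolution S T
  bijS : Function.Bijective (leftHomothety S R T)
  bijR : Function.Bijective (rightHomothety S R T)
  extR : ExtVanishAll Rᵐᵒᵖ T T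
  extS : ExtVanishAll S T T

/-- An `(S, R)`-bimodule `T` is tensorly faithful if `T ⊗_R M = 0` implies `M = 0` and
`N ⊗_S T = 0` implies `N = 0`. -/
def IsTensorlyFaithful : Prop :=
  (∀ (M : Type u) [AddCommGroup M] [Module R M],
      Subsingleton (MTensor R T M) → Subsingleton M) ∧
  (∀ (N : Type u) [AddCommGroup N] [Module Sᵐᵒᵖ N],
      Subsingleton (MTensor S N T) → Subsingleton N)

/-- Membership in the Auslander class `𝒜_T(S)`. -/
structure InAuslanderClass (N : Type u) [AddCommGroup N] [Module Sᵐᵒᵖ N] : Prop where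
  torVanish : TorVanishAll S N T
  extVanish : ExtVanishAll Rᵐᵒᵖ T (MTensor S N T)
  thetaBij : Function.Bijective (MTensor.thetaFun S N T R)

/-- Membership in the Bass class `ℬ_T(R)`. -/
structure InBassClass (M : Type u) [AddCommGroup M] [Module Rᵐᵒᵖ M] : Prop where
  extVanish : ExtVanishAll Rᵐᵒᵖ T M
  torVanish : TorVanishAll S (T →ₗ[Rᵐᵒᵖ] M) T
  nuBij : Function.Bijective (MTensor.nuFun S R T M)

end Bimodules

/-! ## Cotilting and tilting modules -/

/-- A cotilting right `R`-module (Hügel–Coelho): finite injective dimension,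
`Ext^{i≥1}_R(Cᴵ, C) = 0` for every index set `I`, and there is a finite exact sequence
`0 → C_r → ⋯ → C_0 → Q → 0` with all `C_i ∈ Prod(C)` and `Q` an injective cogenerator. -/
structure IsCotilting (R : Type u) [Ring R] (C : Type u) [AddCommGroup C] [Module Rᵐᵒᵖ C] :
    Prop where
  finInjDim : ∃ n, InjDimLE Rᵐᵒᵖ C n
  extProdVanish : ∀ I : Type u, ExtVanishAll Rᵐᵒᵖ (I → C) C
  coresolution : ∃ (Q : ModuleCat.{u} Rᵐᵒᵖ) (r : ℕ),
    IsInjectiveCogenerator Rᵐᵒᵖ Q ∧ HasClassResolution Rᵐᵒᵖ (InProdClass Rᵐᵒᵖ C) r Q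

/-- An `n`-tilting right `R`-module (Miyashita). -/
structure IsNTilting (R : Type u) [Ring R] (T : Type u) [AddCommGroup T] [Module Rᵐᵒᵖ T]
    (n : ℕ) : Prop where
  fgProjRes : HasFGProjResolution Rᵐᵒᵖ T
  projDim : ProjDimLE Rᵐᵒᵖ T n
  extVanish : ExtVanishAll Rᵐᵒᵖ T T
  coresolution : HasClassCoresolution Rᵐᵒᵖ (InFinAddClass Rᵐᵒᵖ T) n (ModuleCat.of Rᵐᵒᵖ R)

/-- The data of a coresolution `0 → R → P 0 → P 1 → ⋯` of right `R`-modules. -/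
structure WakamatsuCoresolutionData (R : Type u) [Ring R] : Type (u + 1) where
  P : ℕ → Type u
  [instAdd : ∀ n, AddCommGroup (P n)]
  [instMod : ∀ n, Module Rᵐᵒᵖ (P n)]
  f0 : R →ₗ[Rᵐᵒᵖ] P 0
  d : ∀ n, P n →ₗ[Rᵐᵒᵖ] P (n + 1)

attribute [instance] WakamatsuCoresolutionData.instAdd WakamatsuCoresolutionData.instMod

/-- A Wakamatsu tilting right `R`-module: it admits a resolution by finitely generated
projective right `R`-modules, `Ext^{i≥1}_R(T, T) = 0`, and there is an exact sequence
`0 → R → T^0 → T^1 → ⋯` with each `T^i ∈ add(T)` and `Ext^1_R(Coker f, T) = 0` for every map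
`f` in this sequence. -/
def IsWakamatsuTiltingModule (R : Type u) [Ring R] (T : Type u) [AddCommGroup T]
    [Module Rᵐᵒᵖ T] : Prop :=
  HasFGProjResolution Rᵐᵒᵖ T ∧ ExtVanishAll Rᵐᵒᵖ T T ∧
    ∃ W : WakamatsuCoresolutionData R,
      Function.Injective W.f0 ∧ Function.Exact W.f0 (W.d 0) ∧
      (∀ n, Function.Exact (W.d n) (W.d (n + 1))) ∧
      (∀ n, InFinAddClass Rᵐᵒᵖ T (ModuleCat.of Rᵐᵒᵖ (W.P n))) ∧
      Ext1Vanishes Rᵐᵒᵖ ((W.P 0) ⧸ LinearMap.range W.f0) T ∧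
      (∀ n, Ext1Vanishes Rᵐᵒᵖ ((W.P (n + 1)) ⧸ LinearMap.range (W.d n)) T)

/-! Write `X^+ = Hom_ℤ(X, ℚ/ℤ)`. Since `(N ⊗_S T)^+ = Hom_S(N, T^+)`, one has
`Tor^S_i(N, T)^+ = Ext^i_S(N, T^+)`, and the evaluation map of `M` is bijective exactly when its
transpose `M^+ → Hom_S(Hom_R(T, M), T^+)` is. So the Bass class is described by the vanishing of
`Ext` groups and the bijectivity of a map between `Hom` groups.

For injective `E`, the natural map `Hom_R(Hom_S(P, T), E)^+ → Hom_S(Hom_R(T, E), P^+)` is an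
isomorphism when `P` is finitely generated projective. Comparing both sides along a resolution of
`_S T`, and using `End(_S T) = R` and `Ext^{≥1}_S(T, T) = 0`, puts `E` in the Bass class.

If `pd T_R` or `id T_R` is finite, dimension shifting along a totally acyclic complex of injectives
gives `Ext^{≥1}_R(T, Z) = 0` for every module of cycles `Z`. Hence `Hom_R(T, -)` keeps the complex
exact, and shifting in both directions along it puts `Z` in the Bass class.

Finally, tensor faithfulness makes `Hom_R(T, -)` preserve any surjection between modules of the
Bass class, so the class is closed under kernels of surjections, and finite coresolutions follow by
induction on their length. -/

open CategoryTheory.Abelian LinearMap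

/-! ## Short exact sequences and the exactness of `Hom` -/

/-- `0 → X → Y → Z → 0` is a short exact sequence of modules. -/
structure IsShortExact {A X Y Z : Type*} [Ring A] [AddCommGroup X] [Module A X]
    [AddCommGroup Y] [Module A Y] [AddCommGroup Z] [Module A Z]
    (f : X →ₗ[A] Y) (g : Y →ₗ[A] Z) : Prop where
  injective : Injective f
  exact : Exact f g
  surjective : Surjective g

section Exactness

variable {A W X Y Z : Type*} [Ring A] [AddCommGroup W] [Module A W] [AddCommGroup X] [Module A X]
  [AddCommGroup Y] [Module A Y] [AddCommGroup Z] [Module A Z]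

theorem IsShortExact.ker_subtype {g : Y →ₗ[A] Z} (hg : Surjective g) :
    IsShortExact (ker g).subtype g :=
  ⟨Submodule.injective_subtype _, exact_subtype_ker_map g, hg⟩

theorem IsShortExact.range_mkQ {f : X →ₗ[A] Y} (hf : Injective f) :
    IsShortExact f (range f).mkQ :=
  ⟨hf, exact_map_mkQ_range f, Submodule.mkQ_surjective _⟩

theorem IsShortExact.comp_equiv {f : X →ₗ[A] Y} {g : Y →ₗ[A] Z} (h : IsShortExact f g)
    (e : W ≃ₗ[A] X) : IsShortExact (f ∘ₗ e.toLinearMap) g :=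
  ⟨h.injective.comp e.injective, e.precomp_exact_iff_exact.2 h.exact, h.surjective⟩

theorem exact_comp_iff_surjective {X' X Y Z : Type*} [Zero Z] {a : X' → X} {b : X → Y}
    {c : Y → Z} (hbc : Exact b c) (hb : Injective b) : Exact (b ∘ a) c ↔ Surjective a := by
  refine ⟨fun h x => ?_, fun ha y => by rw [ha.range_comp, hbc]⟩
  obtain ⟨x', hx'⟩ := (h (b x)).1 (hbc.apply_apply_eq_zero x)
  exact ⟨x', hb hx'⟩

theorem lcomp_injective {g : Y →ₗ[A] Z} (hg : Surjective g) : Injective (lcomp ℤ W g) :=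
  fun _ _ h => (cancel_right hg).1 h

theorem exact_lcomp {f : X →ₗ[A] Y} {g : Y →ₗ[A] Z} (h : Exact f g) (hg : Surjective g) :
    Exact (lcomp ℤ W g) (lcomp ℤ W f) := by
  refine fun u => ⟨fun hu => ?_, ?_⟩
  · refine ⟨(range f).liftQ u (range_le_ker_iff.2 hu) ∘ₗ
      (h.linearEquivOfSurjective hg).symm.toLinearMap, LinearMap.ext fun y => ?_⟩
    exact congrArg ((range f).liftQ u (range_le_ker_iff.2 hu))
      (h.linearEquivOfSurjective_symm_apply hg y)
  · rintro ⟨v, rfl⟩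
    exact congrArg (v ∘ₗ ·) h.linearMap_comp_eq_zero |>.trans (comp_zero v)

theorem exact_lcomp_of_baer (hW : Module.Baer A W) {f : X →ₗ[A] Y} {g : Y →ₗ[A] Z}
    (h : Exact f g) : Exact (lcomp ℤ W g) (lcomp ℤ W f) := by
  have hg : Exact f g.rangeRestrict := (Injective.comp_exact_iff_exact
    (i := (range g).subtype) (Submodule.injective_subtype _)).1 h
  have hs : Surjective (lcomp ℤ W (range g).subtype) :=
    hW.extension_property _ (Submodule.injective_subtype _)
  exact hs.comp_exact_iff_exact.2 (exact_lcomp hg g.surjective_rangeRestrict)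

theorem compRight_injective {f : X →ₗ[A] Y} (hf : Injective f) :
    Injective (compRight ℤ f : (W →ₗ[A] X) →ₗ[ℤ] _) :=
  fun _ _ h => (cancel_left hf).1 h

theorem exact_compRight {f : X →ₗ[A] Y} {g : Y →ₗ[A] Z} (h : Exact f g) (hf : Injective f) :
    Exact (compRight ℤ f : (W →ₗ[A] X) →ₗ[ℤ] _) (compRight ℤ g : (W →ₗ[A] Y) →ₗ[ℤ] _) := by
  refine fun u => ⟨fun hu => ?_, ?_⟩
  · have hmem (w : W) : u w ∈ range f := (h _).1 (LinearMap.congr_fun hu w)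
    refine ⟨(LinearEquiv.ofInjective f hf).symm.toLinearMap ∘ₗ u.codRestrict _ hmem,
      LinearMap.ext fun w => ?_⟩
    exact congrArg Subtype.val
      ((LinearEquiv.ofInjective f hf).apply_symm_apply ⟨u w, hmem w⟩)
  · rintro ⟨v, rfl⟩
    exact congrArg (· ∘ₗ v) h.linearMap_comp_eq_zero |>.trans (zero_comp v)

end Exactness

/-! ## Vanishing of `Ext` -/

/-- `ExtVanishes A X Y n` says that `Ext^n_A(X, Y) = 0`, in terms of the `Ext` groups of the
category of modules; `ResolutionData.IsProjResolution.extVanishes_iff` relates it to projective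
resolutions. -/
def ExtVanishes (A : Type u) [Ring A] (X Y : Type u) [AddCommGroup X] [Module A X]
    [AddCommGroup Y] [Module A Y] (n : ℕ) : Prop :=
  Subsingleton (Ext (ModuleCat.of A X) (ModuleCat.of A Y) n)

section ExtVanishes

open scoped CategoryTheory

variable {A : Type u} [Ring A] {W X Y Z : Type u}
  [AddCommGroup W] [Module A W] [AddCommGroup X] [Module A X]
  [AddCommGroup Y] [Module A Y] [AddCommGroup Z] [Module A Z]

theorem ExtVanishes.of_projective (hX : Module.Projective A X) (n : ℕ) :
    ExtVanishes A X Y (n + 1) :=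
  have := (IsProjective.iff_projective X).1 hX
  Ext.subsingleton_of_projective _ _ n

theorem ExtVanishes.of_injective (hY : Module.Injective A Y) (n : ℕ) :
    ExtVanishes A X Y (n + 1) :=
  have := (Module.injective_iff_injective_object A Y).1 hY
  Ext.subsingleton_of_injective _ _ n

namespace IsShortExact

variable {f : X →ₗ[A] Y} {g : Y →ₗ[A] Z} {n : ℕ}

theorem shortExact (h : IsShortExact f g) :
    (ModuleCat.shortComplexOfCompEqZero f g h.exact.linearMap_comp_eq_zero).ShortExact :=
  ModuleCat.shortComplex_shortExact _ h.exact h.injective h.surjective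

theorem extVanishes_contravariant₁ (h : IsShortExact f g) (hY : ExtVanishes A Y W n)
    (hZ : ExtVanishes A Z W (n + 1)) : ExtVanishes A X W n := by
  refine subsingleton_of_forall_eq 0 fun x => ?_
  obtain ⟨y, rfl⟩ := Ext.contravariant_sequence_exact₁ h.shortExact (ModuleCat.of A W) x
    (add_comm 1 n) (hZ.elim _ _)
  rw [hY.elim y 0, Ext.comp_zero]

theorem extVanishes_contravariant₃ (h : IsShortExact f g) (hX : ExtVanishes A X W n)
    (hY : ExtVanishes A Y W (n + 1)) : ExtVanishes A Z W (n + 1) := by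
  refine subsingleton_of_forall_eq 0 fun z => ?_
  obtain ⟨x, rfl⟩ := Ext.contravariant_sequence_exact₃ h.shortExact (ModuleCat.of A W) z
    (hY.elim _ _) (add_comm 1 n)
  rw [hX.elim x 0, Ext.comp_zero]

theorem extVanishes_covariant₁ (h : IsShortExact f g) (hZ : ExtVanishes A W Z n)
    (hY : ExtVanishes A W Y (n + 1)) : ExtVanishes A W X (n + 1) := by
  refine subsingleton_of_forall_eq 0 fun x => ?_
  obtain ⟨z, rfl⟩ := Ext.covariant_sequence_exact₁ (ModuleCat.of A W) h.shortExact x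
    (hY.elim _ _) rfl
  rw [hZ.elim z 0, Ext.zero_comp]

theorem extVanishes_covariant₃ (h : IsShortExact f g) (hY : ExtVanishes A W Y n)
    (hX : ExtVanishes A W X (n + 1)) : ExtVanishes A W Z n := by
  refine subsingleton_of_forall_eq 0 fun z => ?_
  obtain ⟨y, rfl⟩ := Ext.covariant_sequence_exact₃ (ModuleCat.of A W) h.shortExact z rfl
    (hX.elim _ _)
  rw [hY.elim y 0, Ext.zero_comp]

theorem extVanishes_one_iff_surjective_lcomp (h : IsShortExact f g)
    (hY : ExtVanishes A Y W 1) : ExtVanishes A Z W 1 ↔ Surjective (lcomp ℤ W f) := by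
  constructor
  · intro hZ k
    obtain ⟨y, hy⟩ := Ext.contravariant_sequence_exact₁ h.shortExact (ModuleCat.of A W)
      (Ext.mk₀ (ModuleCat.ofHom k)) (add_comm 1 0) (hZ.elim _ _)
    obtain ⟨l, rfl⟩ := (Ext.mk₀_bijective _ _).2 y
    rw [Ext.mk₀_comp_mk₀] at hy
    exact ⟨l.hom, congrArg ModuleCat.Hom.hom ((Ext.mk₀_bijective _ _).1 hy)⟩
  · intro hs
    refine subsingleton_of_forall_eq 0 fun z => ?_
    obtain ⟨y, rfl⟩ := Ext.contravariant_sequence_exact₃ h.shortExact (ModuleCat.of A W) z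
      (hY.elim _ _) (add_comm 1 0)
    obtain ⟨k, rfl⟩ := (Ext.mk₀_bijective _ _).2 y
    obtain ⟨l, hl⟩ := hs k.hom
    obtain rfl : ModuleCat.ofHom f ≫ ModuleCat.ofHom l = k := ModuleCat.hom_ext hl
    rw [← Ext.mk₀_comp_mk₀]
    exact h.shortExact.extClass_comp_assoc _

theorem extVanishes_one_iff_surjective_compRight (h : IsShortExact f g)
    (hY : ExtVanishes A W Y 1) :
    ExtVanishes A W X 1 ↔ Surjective (compRight ℤ g : (W →ₗ[A] Y) →ₗ[ℤ] _) := by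
  constructor
  · intro hX k
    obtain ⟨y, hy⟩ := Ext.covariant_sequence_exact₃ (ModuleCat.of A W) h.shortExact
      (Ext.mk₀ (ModuleCat.ofHom k)) (zero_add 1) (hX.elim _ _)
    obtain ⟨l, rfl⟩ := (Ext.mk₀_bijective _ _).2 y
    rw [Ext.mk₀_comp_mk₀] at hy
    exact ⟨l.hom, congrArg ModuleCat.Hom.hom ((Ext.mk₀_bijective _ _).1 hy)⟩
  · intro hs
    refine subsingleton_of_forall_eq 0 fun x => ?_
    obtain ⟨y, rfl⟩ := Ext.covariant_sequence_exact₁ (ModuleCat.of A W) h.shortExact x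
      (hY.elim _ _) (zero_add 1)
    obtain ⟨k, rfl⟩ := (Ext.mk₀_bijective _ _).2 y
    obtain ⟨l, hl⟩ := hs k.hom
    obtain rfl : ModuleCat.ofHom l ≫ ModuleCat.ofHom g = k := ModuleCat.hom_ext hl
    rw [← Ext.mk₀_comp_mk₀, Ext.comp_assoc_of_second_deg_zero]
    exact (congrArg ((Ext.mk₀ (ModuleCat.ofHom l)).comp · (zero_add 1))
      h.shortExact.comp_extClass).trans (Ext.comp_zero ..)

end IsShortExact

end ExtVanishes

/-! ## Projective resolutions -/

namespace ResolutionData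

variable {A : Type u} [Ring A] {X : Type u} [AddCommGroup X] [Module A X]

/-- The resolution of the first syzygy obtained by truncating a resolution. -/
def shift (Q : ResolutionData A X) (h : Exact (Q.d 0) Q.ε) : ResolutionData A (ker Q.ε) where
  P n := Q.P (n + 1)
  d n := Q.d (n + 1)
  ε := (Q.d 0).codRestrict _ h.apply_apply_eq_zero

namespace IsProjResolution

variable {Q : ResolutionData A X}

theorem syzygy (hQ : Q.IsProjResolution) : IsShortExact (ker Q.ε).subtype Q.ε :=
  .ker_subtype hQ.surj

theorem shift (hQ : Q.IsProjResolution) : (Q.shift hQ.exact0).IsProjResolution where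
  proj n := hQ.proj (n + 1)
  surj x := by
    obtain ⟨y, hy⟩ := (hQ.exact0 x).1 x.2
    exact ⟨y, Subtype.ext hy⟩
  exact0 x := Subtype.ext_iff.trans (hQ.exactSucc 0 x)
  exactSucc n := hQ.exactSucc (n + 1)

theorem extVanishes_iff {X : Type u} [AddCommGroup X] [Module A X] {Q : ResolutionData A X}
    (hQ : Q.IsProjResolution) {Y : Type u} [AddCommGroup Y] [Module A Y] (n : ℕ) :
    ExtVanishes A X Y (n + 1) ↔
      Exact (lcomp ℤ Y (Q.d n)) (lcomp ℤ Y (Q.d (n + 1))) := by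
  induction n generalizing X with
  | zero =>
    rw [hQ.syzygy.extVanishes_one_iff_surjective_lcomp (.of_projective (hQ.proj 0) 0)]
    exact (exact_comp_iff_surjective
      (exact_lcomp hQ.shift.exact0 hQ.shift.surj) (lcomp_injective hQ.shift.surj)).symm
  | succ n ih =>
    rw [← show _ ↔ Exact (lcomp ℤ Y (Q.d (n + 1))) (lcomp ℤ Y (Q.d (n + 1 + 1))) from ih hQ.shift]
    exact ⟨hQ.syzygy.extVanishes_contravariant₁ (.of_projective (hQ.proj 0) n),
      fun h => hQ.syzygy.extVanishes_contravariant₃ h (.of_projective (hQ.proj 0) (n + 1))⟩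

end IsProjResolution

end ResolutionData

theorem exists_isProjResolution (A : Type u) [Ring A] (X : Type u) [AddCommGroup X]
    [Module A X] : ∃ Q : ResolutionData A X, Q.IsProjResolution := by
  let P := CategoryTheory.projectiveResolution (ModuleCat.of A X)
  exact ⟨{
    P := fun n => P.complex.X n
    d := fun n => (P.complex.d (n + 1) n).hom
    ε := (P.π.f 0).hom },
    fun n => (IsProjective.iff_projective _).2 (P.projective n),
    (ModuleCat.epi_iff_surjective (P.π.f 0)).1 inferInstance,
    (CategoryTheory.ShortComplex.ShortExact.moduleCat_exact_iff_function_exact _).1 P.exact₀,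
    fun n => (CategoryTheory.ShortComplex.ShortExact.moduleCat_exact_iff_function_exact _).1
      (P.exact_succ n)⟩

theorem extVanishAll_iff {A : Type u} [Ring A] {X Y : Type u} [AddCommGroup X] [Module A X]
    [AddCommGroup Y] [Module A Y] :
    ExtVanishAll A X Y ↔ ∀ n, ExtVanishes A X Y (n + 1) := by
  constructor
  · rintro ⟨Q, hQ, h⟩ n
    exact (hQ.extVanishes_iff n).2 (h n)
  · intro h
    obtain ⟨Q, hQ⟩ := exists_isProjResolution A X
    exact ⟨Q, hQ, fun n => (hQ.extVanishes_iff n).1 (h n)⟩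

/-! ## Character modules -/

section CharacterModule

variable {S : Type*} [Ring S] {T T' T'' : Type*} [AddCommGroup T] [Module S T]
  [AddCommGroup T'] [Module S T'] [AddCommGroup T''] [Module S T'']

instance : SMul Sᵐᵒᵖ (CharacterModule T) :=
  ⟨fun σ c => AddMonoidHom.comp (c : T →+ _) (DistribSMul.toAddMonoidHom T σ.unop)⟩

instance : Module Sᵐᵒᵖ (CharacterModule T) where
  one_smul c := CharacterModule.ext _ fun t => congrArg c (one_smul S t)
  mul_smul a b c := CharacterModule.ext _ fun t => congrArg c (mul_smul b.unop a.unop t)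
  smul_zero _ := rfl
  smul_add _ _ _ := rfl
  add_smul a b c := CharacterModule.ext _ fun t =>
    (congrArg c (add_smul a.unop b.unop t)).trans (map_add c _ _)
  zero_smul c := CharacterModule.ext _ fun t => (congrArg c (zero_smul S t)).trans (map_zero c)

/-- The map induced on character modules, which is linear for the right action of a possibly
noncommutative ring (`CharacterModule.dual` treats commutative rings). -/
def characterMap (f : T →ₗ[S] T') : CharacterModule T' →ₗ[Sᵐᵒᵖ] CharacterModule T where
  toFun c := AddMonoidHom.comp (c : T' →+ _) f.toAddMonoidHom
  map_add' _ _ := rfl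
  map_smul' σ c := CharacterModule.ext _ fun t => (congrArg c (f.map_smul σ.unop t)).symm

theorem characterMap_bijective_iff {f : T →ₗ[S] T'} : Bijective (characterMap f) ↔ Bijective f :=
  CharacterModule.dual_bijective_iff_bijective (f := f.restrictScalars ℤ)

theorem characterMap_injective {f : T →ₗ[S] T'} (hf : Surjective f) :
    Injective (characterMap f) :=
  CharacterModule.dual_injective_of_surjective (f.restrictScalars ℤ) hf

theorem characterMap_surjective {f : T →ₗ[S] T'} (hf : Injective f) :
    Surjective (characterMap f) :=
  CharacterModule.dual_surjective_of_injective (f.restrictScalars ℤ) hf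

theorem exact_characterMap_iff {f : T →ₗ[S] T'} {g : T' →ₗ[S] T''} :
    Exact (characterMap g) (characterMap f) ↔ Exact f g := by
  constructor
  · refine fun h t => ⟨fun ht => ?_, ?_⟩
    · rw [← coe_range, SetLike.mem_coe, ← Submodule.Quotient.mk_eq_zero]
      refine CharacterModule.eq_zero_of_character_apply fun c => ?_
      obtain ⟨v, hv⟩ := (h (characterMap (range f).mkQ c)).1 (CharacterModule.ext _ fun x =>
        (congrArg c ((exact_map_mkQ_range f).apply_apply_eq_zero x)).trans (map_zero c))
      exact (DFunLike.congr_fun hv t).symm.trans ((congrArg v ht).trans (map_zero v))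
    · rintro ⟨x, rfl⟩
      exact CharacterModule.eq_zero_of_character_apply fun c =>
        DFunLike.congr_fun (h.apply_apply_eq_zero c) x
  · refine fun h c => ⟨fun hc => ?_, ?_⟩
    · obtain ⟨v, hv⟩ := (exact_lcomp_of_baer (.of_divisible (AddCircle (1 : ℚ)))
        (f := f.restrictScalars ℤ) (g := g.restrictScalars ℤ) h
        (AddMonoidHom.toIntLinearMap c)).1 (LinearMap.ext fun x => DFunLike.congr_fun hc x)
      exact ⟨v.toAddMonoidHom, CharacterModule.ext _ (LinearMap.congr_fun hv)⟩
    · rintro ⟨v, rfl⟩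
      exact CharacterModule.ext _ fun t =>
        (congrArg v (h.apply_apply_eq_zero t)).trans (map_zero v)

theorem IsShortExact.characterMap {f : T →ₗ[S] T'} {g : T' →ₗ[S] T''} (h : IsShortExact f g) :
    IsShortExact (characterMap g) (characterMap f) :=
  ⟨characterMap_injective h.surjective, exact_characterMap_iff.2 h.exact,
    characterMap_surjective h.injective⟩

end CharacterModule

section LeftCharacterModule

variable {S : Type*} [Ring S] {T : Type*} [AddCommGroup T] [Module S T]
  {X Y : Type*} [AddCommGroup X] [Module Sᵐᵒᵖ X] [AddCommGroup Y] [Module Sᵐᵒᵖ Y]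

/-- The left action of `S` on the characters of a right `S`-module. -/
abbrev leftCharacterModule : Module S (CharacterModule X) :=
  Module.compHom _ (RingEquiv.opOp S).toRingHom

attribute [local instance] leftCharacterModule

/-- The adjunction between maps of right modules `X → T^+` and maps of left modules `T → X^+`,
both of which are balanced pairings `X × T → ℚ/ℤ`. -/
def characterFlip :
    (X →ₗ[Sᵐᵒᵖ] CharacterModule T) ≃ (T →ₗ[S] CharacterModule X) where
  toFun g :=
    { toFun := AddMonoidHom.flip (g.toAddMonoidHom : X →+ T →+ AddCircle (1 : ℚ))
      map_add' := map_add _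
      map_smul' := fun s t => CharacterModule.ext _ fun x =>
        (DFunLike.congr_fun (g.map_smul (op s) x) t).symm }
  invFun h :=
    { toFun := AddMonoidHom.flip (h.toAddMonoidHom : T →+ X →+ AddCircle (1 : ℚ))
      map_add' := map_add _
      map_smul' := fun σ x => CharacterModule.ext _ fun t =>
        (DFunLike.congr_fun (h.map_smul σ.unop t) x).symm }

/-- The map induced on the left modules of characters of right modules. -/
def leftCharacterMap (f : X →ₗ[Sᵐᵒᵖ] Y) : CharacterModule Y →ₗ[S] CharacterModule X where
  toFun := characterMap f
  map_add' := map_add _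
  map_smul' s := (characterMap f).map_smul (op (op s))

end LeftCharacterModule

section InjectiveCharacterModule

variable {S : Type u} [Ring S] {T : Type u} [AddCommGroup T] [Module S T]

attribute [local instance] leftCharacterModule in
theorem injective_characterModule (hT : Module.Projective S T) :
    Module.Injective Sᵐᵒᵖ (CharacterModule T) where
  out X Y _ _ _ _ f hf g := by
    obtain ⟨H, hH⟩ := Module.projective_lifting_property (leftCharacterMap f) (characterFlip g)
      (characterMap_surjective hf)
    exact ⟨characterFlip.symm H, fun x => CharacterModule.ext _ fun t =>
      DFunLike.congr_fun (LinearMap.congr_fun hH t) x⟩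

theorem ResolutionData.IsProjResolution.extVanishes_characterModule_iff {K : Type u}
    [AddCommGroup K] [Module S K] {Q : ResolutionData S K} (hQ : Q.IsProjResolution)
    {N : Type u} [AddCommGroup N] [Module Sᵐᵒᵖ N] (n : ℕ) :
    ExtVanishes Sᵐᵒᵖ N (CharacterModule K) (n + 1) ↔
      Exact (compRight ℤ (M := N) (characterMap (Q.d n)))
        (compRight ℤ (M := N) (characterMap (Q.d (n + 1)))) := by
  have hinj := injective_characterModule (hQ.proj 0)
  induction n generalizing K with
  | zero =>
    rw [hQ.syzygy.characterMap.extVanishes_one_iff_surjective_compRight (.of_injective hinj 0)]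
    have hε := characterMap_injective hQ.shift.surj
    exact (exact_comp_iff_surjective
      (exact_compRight (exact_characterMap_iff.2 hQ.shift.exact0) hε)
      (compRight_injective hε)).symm
  | succ n ih =>
    refine Iff.trans ?_ (ih hQ.shift (injective_characterModule (hQ.proj 1)))
    exact ⟨hQ.syzygy.characterMap.extVanishes_covariant₃ (.of_injective hinj n),
      fun h => hQ.syzygy.characterMap.extVanishes_covariant₁ h (.of_injective hinj (n + 1))⟩

end InjectiveCharacterModule

/-! ## Tensor products and their characters -/

namespace MTensor

variable {S : Type u} [Ring S] {N : Type u} [AddCommGroup N] [Module Sᵐᵒᵖ N]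
  {T : Type u} [AddCommGroup T] [Module S T]

theorem mk_add_left (n n' : N) (t : T) :
    (MTensor.mk (n + n') t : MTensor S N T) = MTensor.mk n t + MTensor.mk n' t :=
  congrArg QuotientAddGroup.mk (TensorProduct.tmul_add t n n')

theorem mk_smul (n : N) (s : S) (t : T) :
    (MTensor.mk n (s • t) : MTensor S N T) = MTensor.mk (op s • n) t :=
  QuotientAddGroup.eq_iff_sub_mem.2 (AddSubgroup.subset_closure ⟨s, t, n, rfl⟩)

theorem addHom_ext {D : Type*} [AddCommGroup D] {f g : MTensor S N T →+ D}
    (h : ∀ n t, f (MTensor.mk n t) = g (MTensor.mk n t)) : f = g := by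
  refine QuotientAddGroup.addMonoidHom_ext _ (AddMonoidHom.ext fun x => ?_)
  induction x with
  | zero => exact (map_zero _).trans (map_zero _).symm
  | tmul t n => exact h n t
  | add x y hx hy => rw [map_add, map_add, hx, hy]

/-- The adjunction between characters of `N ⊗_S T` and maps from `N` to the characters of `T`. -/
def curryEquiv : CharacterModule (MTensor S N T) ≃ₗ[ℤ] (N →ₗ[Sᵐᵒᵖ] CharacterModule T) :=
  AddEquiv.toIntLinearEquiv
  { toFun := fun c =>
      { toFun := fun n => AddMonoidHom.mk' (fun t => c (MTensor.mk n t)) fun t t' => by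
          rw [mk_add_right, map_add]
        map_add' := fun n n' => CharacterModule.ext _ fun t =>
          (congrArg c (mk_add_left n n' t)).trans (map_add c _ _)
        map_smul' := fun σ n => CharacterModule.ext _ fun t =>
          (congrArg c (mk_smul n σ.unop t)).symm }
    invFun := fun f => QuotientAddGroup.lift (mtRel S N T)
      (TensorProduct.liftAddHom
        (AddMonoidHom.flip (f.toAddMonoidHom : N →+ T →+ AddCircle (1 : ℚ)))
        fun z t n => by
          rw [map_zsmul, map_zsmul]
          rfl)
      (by
        refine (AddSubgroup.closure_le _).2 ?_
        rintro x ⟨s, t, n, rfl⟩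
        simp only [SetLike.mem_coe, AddMonoidHom.mem_ker, map_sub,
          TensorProduct.liftAddHom_tmul]
        exact sub_eq_zero.2 (DFunLike.congr_fun (f.map_smul (op s) n) t).symm)
    left_inv := fun _ => addHom_ext fun _ _ => rfl
    right_inv := fun _ => rfl
    map_add' := fun _ _ => rfl }

theorem subsingleton_of_hom [Subsingleton (N →ₗ[Sᵐᵒᵖ] CharacterModule T)] :
    Subsingleton (MTensor S N T) := by
  have : Subsingleton (CharacterModule (MTensor S N T)) := curryEquiv.subsingleton
  exact subsingleton_of_forall_eq 0 fun x => CharacterModule.eq_zero_of_character_apply fun c =>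
    DFunLike.congr_fun (Subsingleton.elim c 0) x

theorem exact_map_iff {N' N'' : Type u} [AddCommGroup N'] [Module Sᵐᵒᵖ N'] [AddCommGroup N'']
    [Module Sᵐᵒᵖ N''] {f : N →ₗ[Sᵐᵒᵖ] N'} {g : N' →ₗ[Sᵐᵒᵖ] N''} :
    Exact (MTensor.map (T := T) f) (MTensor.map (T := T) g) ↔
      Exact (lcomp ℤ (CharacterModule T) g) (lcomp ℤ (CharacterModule T) f) := by
  refine Iff.trans (exact_characterMap_iff (f := (map (T := T) f).toIntLinearMap)
    (g := (map (T := T) g).toIntLinearMap)).symm (Iff.symm ?_)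
  exact Exact.iff_of_ladder_linearEquiv
    (f₁₂ := (characterMap (map (T := T) g).toIntLinearMap).restrictScalars ℤ)
    (f₂₃ := (characterMap (map (T := T) f).toIntLinearMap).restrictScalars ℤ)
    (e₁ := curryEquiv) (e₂ := curryEquiv) (e₃ := curryEquiv) rfl rfl

end MTensor

theorem torVanishAll_iff {S : Type u} [Ring S] {N : Type u} [AddCommGroup N]
    [Module Sᵐᵒᵖ N] {T : Type u} [AddCommGroup T] [Module S T] :
    TorVanishAll S N T ↔ ∀ n, ExtVanishes Sᵐᵒᵖ N (CharacterModule T) (n + 1) := by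
  simp only [TorVanishAll, MTensor.exact_map_iff]
  exact extVanishAll_iff

/-! ## The Bass class and short exact sequences -/

section BassClass

variable {S R : Type u} [Ring S] [Ring R] {T : Type u} [AddCommGroup T] [Module S T]
  [Module Rᵐᵒᵖ T] [SMulCommClass S Rᵐᵒᵖ T] {M B C : Type u} [AddCommGroup M] [Module Rᵐᵒᵖ M]
  [AddCommGroup B] [Module Rᵐᵒᵖ B] [AddCommGroup C] [Module Rᵐᵒᵖ C]

variable (S R T M) in
/-- The map `M^+ → Hom_S(Hom_R(T, M), T^+)`, `χ ↦ (f ↦ χ ∘ f)`, which is the transpose of the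
evaluation map `Hom_R(T, M) ⊗_S T → M`. -/
def evalTranspose :
    CharacterModule M →ₗ[ℤ] ((T →ₗ[Rᵐᵒᵖ] M) →ₗ[Sᵐᵒᵖ] CharacterModule T) :=
  MTensor.curryEquiv.toLinearMap ∘ₗ
    (characterMap (MTensor.nuFun S R T M).toIntLinearMap).restrictScalars ℤ

theorem bijective_evalTranspose_iff :
    Bijective (evalTranspose S R T M) ↔ Bijective (MTensor.nuFun S R T M) :=
  (EquivLike.comp_bijective _ (MTensor.curryEquiv (S := S) (N := T →ₗ[Rᵐᵒᵖ] M))).trans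
    characterMap_bijective_iff

theorem inBassClass_iff : InBassClass S R T M ↔
    (∀ n, ExtVanishes Rᵐᵒᵖ T M (n + 1)) ∧
      (∀ n, ExtVanishes Sᵐᵒᵖ (T →ₗ[Rᵐᵒᵖ] M) (CharacterModule T) (n + 1)) ∧
      Bijective (evalTranspose S R T M) := by
  rw [← extVanishAll_iff, ← torVanishAll_iff, bijective_evalTranspose_iff]
  exact ⟨fun h => ⟨h.1, h.2, h.3⟩, fun h => ⟨h.1, h.2.1, h.2.2⟩⟩

variable (S T) in
/-- Functoriality of the right `S`-module `Hom_R(T, M)` in `M`. -/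
def homMap (f : M →ₗ[Rᵐᵒᵖ] B) : (T →ₗ[Rᵐᵒᵖ] M) →ₗ[Sᵐᵒᵖ] (T →ₗ[Rᵐᵒᵖ] B) where
  toFun u := f ∘ₗ u
  map_add' u v := comp_add u v f
  map_smul' _ _ := rfl

variable {f : M →ₗ[Rᵐᵒᵖ] B} {g : B →ₗ[Rᵐᵒᵖ] C}

theorem IsShortExact.homMap (h : IsShortExact f g) (hs : Surjective (homMap S T g)) :
    IsShortExact (homMap S T f) (homMap S T g) :=
  ⟨compRight_injective h.injective, exact_compRight h.exact h.injective, hs⟩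

theorem InBassClass.of_isShortExact (h : IsShortExact f g) (hs : Surjective (homMap S T g))
    (hB : InBassClass S R T B) (hC : InBassClass S R T C) : InBassClass S R T M := by
  obtain ⟨extB, torB, bijB⟩ := inBassClass_iff.1 hB
  obtain ⟨extC, torC, bijC⟩ := inBassClass_iff.1 hC
  have hh := h.homMap hs
  refine inBassClass_iff.2 ⟨fun n => ?_, fun n => ?_, ?_⟩
  · cases n with
    | zero => exact (h.extVanishes_one_iff_surjective_compRight (extB 0)).2 hs
    | succ n => exact h.extVanishes_covariant₁ (extC n) (extB (n + 1))
  · exact hh.extVanishes_contravariant₁ (torB n) (torC (n + 1))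
  · exact bijective_of_surjective_of_bijective_of_right_exact
      ((characterMap g).restrictScalars ℤ) ((characterMap f).restrictScalars ℤ)
      (lcomp ℤ _ (_root_.homMap S T g)) (lcomp ℤ _ (_root_.homMap S T f))
      (evalTranspose S R T C) (evalTranspose S R T B) (evalTranspose S R T M) rfl rfl
      h.characterMap.exact (exact_lcomp hh.exact hs) bijC.2 bijB h.characterMap.surjective
      ((hh.extVanishes_one_iff_surjective_lcomp (torB 0)).1 (torC 0))

variable (S T) in
/-- The part of tensor faithfulness of a bimodule that only involves its left module structure:
`N ⊗_S T = 0` implies `N = 0`. -/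
def IsLeftTensorlyFaithful : Prop :=
  ∀ (N : Type u) [AddCommGroup N] [Module Sᵐᵒᵖ N], Subsingleton (MTensor S N T) → Subsingleton N

theorem IsLeftTensorlyFaithful.surjective_homMap (hT : IsLeftTensorlyFaithful S T)
    (hg : Surjective g) (hB : Injective (evalTranspose S R T B))
    (hC : Surjective (evalTranspose S R T C)) : Surjective (homMap S T g) := by
  have hzero (k : ((T →ₗ[Rᵐᵒᵖ] C) ⧸ range (homMap S T g)) →ₗ[Sᵐᵒᵖ] CharacterModule T) :
      k = 0 := by
    obtain ⟨χ, hχ⟩ := hC (k ∘ₗ (range (homMap S T g)).mkQ)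
    have hχg : characterMap g χ = 0 := hB <| LinearMap.ext fun u =>
      (LinearMap.congr_fun hχ (homMap S T g u)).trans <|
        (congrArg k ((exact_map_mkQ_range (homMap S T g)).apply_apply_eq_zero u)).trans
          (map_zero k)
    obtain rfl : χ = 0 := characterMap_injective hg hχg
    exact Submodule.linearMap_qext _ hχ.symm
  have := subsingleton_of_forall_eq 0 hzero
  rw [← range_eq_top, ← Submodule.Quotient.subsingleton_iff]
  exact hT _ MTensor.subsingleton_of_hom

end BassClass

/-! ## Injective modules -/

section BiHomTranspose

variable {S R : Type u} [Ring S] [Ring R] {T : Type u} [AddCommGroup T] [Module S T]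
  [Module Rᵐᵒᵖ T] [SMulCommClass S Rᵐᵒᵖ T] {E : Type u} [AddCommGroup E] [Module Rᵐᵒᵖ E]

variable (S R T E) in
/-- For a left `S`-module `P`, the natural map
`Hom_R(Hom_S(P, T), E)^+ → Hom_S(Hom_R(T, E), P^+)`, `χ ↦ (u ↦ (p ↦ χ (h ↦ u (h p))))`. -/
def biHomTranspose (P : Type u) [AddCommGroup P] [Module S P] :
    CharacterModule ((P →ₗ[S] T) →ₗ[Rᵐᵒᵖ] E) →ₗ[ℤ]
      ((T →ₗ[Rᵐᵒᵖ] E) →ₗ[Sᵐᵒᵖ] CharacterModule P) :=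
  AddMonoidHom.toIntLinearMap
  { toFun := fun χ =>
      { toFun := fun u => AddMonoidHom.mk' (fun p => χ (u ∘ₗ applyₗ' Rᵐᵒᵖ p)) fun p p' => by
          rw [map_add, comp_add, map_add]
        map_add' := fun u v => CharacterModule.ext _ fun p =>
          (congrArg χ (add_comp (applyₗ' Rᵐᵒᵖ p) v u)).trans (map_add χ _ _)
        map_smul' := fun σ u => CharacterModule.ext _ fun p =>
          congrArg χ (LinearMap.ext fun h => congrArg u (h.map_smul σ.unop p).symm) }
    map_zero' := rfl
    map_add' := fun _ _ => rfl }

/-- Multiplication by a linear form `φ` on `P`, as a map `T → Hom_S(P, T)`, `t ↦ (p ↦ φ p • t)`. -/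
def smulRightHom {P : Type u} [AddCommGroup P] [Module S P] (φ : P →ₗ[S] S) :
    T →ₗ[Rᵐᵒᵖ] (P →ₗ[S] T) where
  toFun t := φ.smulRight t
  map_add' t t' := LinearMap.ext fun p => smul_add (φ p) t t'
  map_smul' ρ t := LinearMap.ext fun p => smul_comm (φ p) ρ t

section DualBasis

variable (S) (P : Type u) [AddCommGroup P] [Module S P]

theorem exists_dual_basis [Module.Finite S P] [Module.Projective S P] :
    ∃ (n : ℕ) (x : Fin n → P) (φ : Fin n → P →ₗ[S] S), ∀ p, ∑ k, φ k p • x k = p := by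
  obtain ⟨n, f, g, -, -, hfg⟩ := Module.Finite.exists_comp_eq_id_of_projective S P
  refine ⟨n, fun k => f fun j => if k = j then 1 else 0, fun k => proj k ∘ₗ g, fun p => ?_⟩
  exact (pi_apply_eq_sum_univ f (g p)).symm.trans (LinearMap.congr_fun hfg p)

variable {S P} {ι : Type*} [Fintype ι] {x : ι → P} {φ : ι → P →ₗ[S] S}

theorem sum_comp_smulRightHom_comp_apply (hφ : ∀ p, ∑ k, φ k p • x k = p)
    (v : (P →ₗ[S] T) →ₗ[Rᵐᵒᵖ] E) :
    ∑ k, (v ∘ₗ smulRightHom (φ k)) ∘ₗ applyₗ' Rᵐᵒᵖ (x k) = v := by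
  refine LinearMap.ext fun h => ?_
  have hh : ∑ k, (φ k).smulRight (h (x k)) = h := LinearMap.ext fun p => by
    conv_rhs => rw [← hφ p]
    simp only [LinearMap.sum_apply, smulRight_apply, map_sum, map_smul]
  conv_rhs => rw [← hh, map_sum]
  exact LinearMap.sum_apply ..

end DualBasis

theorem biHomTranspose_bijective_of_projective (P : Type u) [AddCommGroup P] [Module S P]
    [Module.Finite S P] [Module.Projective S P] :
    Bijective (biHomTranspose S R T E P) := by
  obtain ⟨n, x, φ, hφ⟩ := exists_dual_basis S P
  refine ⟨(injective_iff_map_eq_zero _).2 fun χ hχ => CharacterModule.ext _ fun v => ?_,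
    fun w => ?_⟩
  · rw [← sum_comp_smulRightHom_comp_apply hφ v, map_sum]
    exact Finset.sum_eq_zero fun k _ => DFunLike.congr_fun
      (LinearMap.congr_fun hχ (v ∘ₗ smulRightHom (φ k))) (x k)
  · let χ : CharacterModule ((P →ₗ[S] T) →ₗ[Rᵐᵒᵖ] E) :=
      ∑ k, AddMonoidHom.comp
        (AddMonoidHom.flip (w.toAddMonoidHom : _ →+ P →+ AddCircle (1 : ℚ)) (x k))
        (lcomp ℤ E (smulRightHom (φ k))).toAddMonoidHom
    refine ⟨χ, LinearMap.ext fun u => CharacterModule.ext _ fun p => ?_⟩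
    calc χ (u ∘ₗ applyₗ' Rᵐᵒᵖ p)
        = ∑ k, w ((u ∘ₗ applyₗ' Rᵐᵒᵖ p) ∘ₗ smulRightHom (φ k)) (x k) :=
          AddMonoidHom.finsetSum_apply ..
      _ = ∑ k, w u (φ k p • x k) := Finset.sum_congr rfl fun k _ =>
          DFunLike.congr_fun (w.map_smul (op (φ k p)) u) (x k)
      _ = w u p := by rw [← map_sum, hφ p]

theorem biHomTranspose_bijective_of_exact (hE : Module.Baer Rᵐᵒᵖ E) {P₁ P₀ K : Type u}
    [AddCommGroup P₁] [Module S P₁] [AddCommGroup P₀] [Module S P₀] [AddCommGroup K] [Module S K]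
    {d : P₁ →ₗ[S] P₀} {ε : P₀ →ₗ[S] K} (h : Exact d ε) (hε : Surjective ε)
    (h₀ : Bijective (biHomTranspose S R T E P₀)) (h₁ : Injective (biHomTranspose S R T E P₁)) :
    Bijective (biHomTranspose S R T E K) := by
  have hT : Exact (lcomp Rᵐᵒᵖ T ε) (lcomp Rᵐᵒᵖ T d) := exact_lcomp h hε
  have hTE : Exact (lcomp ℤ E (lcomp Rᵐᵒᵖ T d)) (lcomp ℤ E (lcomp Rᵐᵒᵖ T ε)) :=
    exact_lcomp_of_baer hE hT
  have hTE' : Surjective (lcomp ℤ E (lcomp Rᵐᵒᵖ T ε)) :=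
    hE.extension_property _ (lcomp_injective hε)
  exact bijective_of_bijective_of_injective_of_left_exact
    ((characterMap (lcomp ℤ E (lcomp Rᵐᵒᵖ T ε))).restrictScalars ℤ)
    ((characterMap (lcomp ℤ E (lcomp Rᵐᵒᵖ T d))).restrictScalars ℤ)
    (compRight ℤ (characterMap ε)) (compRight ℤ (characterMap d))
    (biHomTranspose S R T E K) (biHomTranspose S R T E P₀) (biHomTranspose S R T E P₁) rfl rfl
    (exact_characterMap_iff.2 hTE)
    (exact_compRight (exact_characterMap_iff.2 h) (characterMap_injective hε)) h₀ h₁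
    (characterMap_injective hTE') (compRight_injective (characterMap_injective hε))

theorem HasFGProjResolution.biHomTranspose_bijective (hE : Module.Baer Rᵐᵒᵖ E) {K : Type u}
    [AddCommGroup K] [Module S K] (hK : HasFGProjResolution S K) :
    Bijective (biHomTranspose S R T E K) := by
  obtain ⟨Q, hQ, hfin⟩ := hK
  have := hQ.proj
  exact biHomTranspose_bijective_of_exact hE hQ.exact0 hQ.surj
    (biHomTranspose_bijective_of_projective _) (biHomTranspose_bijective_of_projective _).1

theorem HasFGProjResolution.extVanishes_hom_characterModule (hE : Module.Baer Rᵐᵒᵖ E)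
    {K : Type u} [AddCommGroup K] [Module S K] (hK : HasFGProjResolution S K) {n : ℕ}
    (h : ExtVanishes S K T (n + 1)) :
    ExtVanishes Sᵐᵒᵖ (T →ₗ[Rᵐᵒᵖ] E) (CharacterModule K) (n + 1) := by
  obtain ⟨Q, hQ, hfin⟩ := hK
  have := hQ.proj
  have hT : Exact (lcomp Rᵐᵒᵖ T (Q.d n)) (lcomp Rᵐᵒᵖ T (Q.d (n + 1))) :=
    (hQ.extVanishes_iff n).1 h
  have hTE : Exact (lcomp ℤ E (lcomp Rᵐᵒᵖ T (Q.d (n + 1)))) (lcomp ℤ E (lcomp Rᵐᵒᵖ T (Q.d n))) :=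
    exact_lcomp_of_baer hE hT
  let τ (k : ℕ) := LinearEquiv.ofBijective (biHomTranspose S R T E (Q.P k))
    (biHomTranspose_bijective_of_projective _)
  refine (hQ.extVanishes_characterModule_iff n).2 ?_
  exact (Exact.iff_of_ladder_linearEquiv
    (f₁₂ := (characterMap (lcomp ℤ E (lcomp Rᵐᵒᵖ T (Q.d n)))).restrictScalars ℤ)
    (f₂₃ := (characterMap (lcomp ℤ E (lcomp Rᵐᵒᵖ T (Q.d (n + 1))))).restrictScalars ℤ)
    (e₁ := τ n) (e₂ := τ (n + 1)) (e₃ := τ (n + 2)) rfl rfl).2 (exact_characterMap_iff.2 hTE)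

theorem bijective_applyₗ'_id (hR : Bijective (rightHomothety S R T)) :
    Bijective (applyₗ' ℤ (LinearMap.id : T →ₗ[S] T) : ((T →ₗ[S] T) →ₗ[Rᵐᵒᵖ] E) →ₗ[ℤ] E) := by
  let e : Rᵐᵒᵖ ≃ₗ[Rᵐᵒᵖ] (T →ₗ[S] T) :=
    LinearEquiv.ofBijective (toSpanSingleton Rᵐᵒᵖ _ LinearMap.id) (hR.comp unop_bijective)
  have he : e 1 = LinearMap.id := one_smul Rᵐᵒᵖ (LinearMap.id : T →ₗ[S] T)
  refine ⟨fun v w h => ?_, fun x => ⟨toSpanSingleton Rᵐᵒᵖ E x ∘ₗ e.symm.toLinearMap, ?_⟩⟩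
  · refine (cancel_right e.surjective).1 (LinearMap.ext_ring ?_)
    exact (congrArg v he).trans (h.trans (congrArg w he).symm)
  · refine (congrArg (toSpanSingleton Rᵐᵒᵖ E x) ?_).trans (one_smul _ x)
    exact e.symm_apply_eq.2 he.symm

theorem bijective_evalTranspose_of_bijective_biHomTranspose
    (hR : Bijective (rightHomothety S R T)) (hT : Bijective (biHomTranspose S R T E T)) :
    Bijective (evalTranspose S R T E) :=
  hT.comp (characterMap_bijective_iff.2 (bijective_applyₗ'_id hR))

variable (S R T) in
/-- The conditions in the definition of a Wakamatsu tilting bimodule that concern its left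
module structure. -/
structure IsLeftWakamatsuTilting : Prop where
  hasFGProjResolution : HasFGProjResolution S T
  bijective_rightHomothety : Bijective (rightHomothety S R T)
  extVanishAll : ExtVanishAll S T T

theorem InBassClass.of_injective (hW : IsLeftWakamatsuTilting S R T)
    (hE : Module.Injective Rᵐᵒᵖ E) : InBassClass S R T E :=
  inBassClass_iff.2 ⟨.of_injective hE, fun n =>
    hW.hasFGProjResolution.extVanishes_hom_characterModule (.of_injective hE)
      (extVanishAll_iff.1 hW.extVanishAll n),
    bijective_evalTranspose_of_bijective_biHomTranspose hW.bijective_rightHomothety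
      (hW.hasFGProjResolution.biHomTranspose_bijective (.of_injective hE))⟩

end BiHomTranspose

/-! ## Cycles of complexes and Gorenstein injective modules -/

theorem ExtVanishes.of_hasClassResolution {A : Type u} [Ring A] {Y : Type u} [AddCommGroup Y]
    [Module A Y] {n : ℕ} {X : ModuleCat.{u} A}
    (hX : HasClassResolution A (fun P => Module.Projective A P) n X) (k : ℕ) :
    ExtVanishes A X Y (n + k + 1) := by
  induction n generalizing X with
  | zero => exact .of_projective hX _
  | succ n ih =>
    obtain ⟨p, hP, hK⟩ := hX
    rw [Nat.add_right_comm n 1 k]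
    exact (IsShortExact.ker_subtype p.surj).extVanishes_contravariant₃ (ih hK) (.of_projective hP _)

namespace ZComplex

variable {A : Type u} [Ring A] {C : ZComplex A}

/-- The corestriction of a differential of an exact complex to the next module of cycles. -/
def IsExact.toCycles (hC : C.IsExact) (i : ℤ) : C.P i →ₗ[A] ker (C.d (i + 1)) :=
  (C.d i).codRestrict _ (hC i).apply_apply_eq_zero

theorem IsExact.isShortExact_toCycles (hC : C.IsExact) (i : ℤ) :
    IsShortExact (ker (C.d i)).subtype (hC.toCycles i) where
  injective := Submodule.injective_subtype _
  exact := (Submodule.injective_subtype (ker (C.d (i + 1)))).comp_exact_iff_exact.1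
    (exact_subtype_ker_map (C.d i))
  surjective := (exact_comp_iff_surjective (exact_subtype_ker_map _)
    (Submodule.injective_subtype _)).1 (hC i)

variable {X : Type u} [AddCommGroup X] [Module A X]

theorem IsExact.extVanishes_ker_of_projDimLE (hC : C.IsExact)
    (hI : ∀ i, Module.Injective A (C.P i)) {n : ℕ} (hX : ProjDimLE A X n) (k : ℕ) (i : ℤ) :
    ExtVanishes A X (ker (C.d i)) (k + 1) := by
  have hn (i : ℤ) (k : ℕ) : ExtVanishes A X (ker (C.d i)) (n + k + 1) := .of_hasClassResolution hX k
  clear hX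
  induction n generalizing i k with
  | zero => simpa only [zero_add] using hn i k
  | succ n ih =>
    refine ih k i ((Equiv.addRight (1 : ℤ)).forall_congr_right.1 fun i k => ?_)
    refine (hC.isShortExact_toCycles i).extVanishes_covariant₃ (.of_injective (hI i) _) ?_
    simpa only [Nat.add_right_comm n 1 k] using hn i k

/-- The complex `Hom_A(X, C)` is exact. -/
def IsHomExact (C : ZComplex A) (X : Type u) [AddCommGroup X] [Module A X] : Prop :=
  ∀ i, Exact (compRight ℤ (M := X) (C.d i)) (compRight ℤ (M := X) (C.d (i + 1)))

theorem IsExact.extVanishes_ker_of_isHomExact (hC : C.IsExact)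
    (hI : ∀ i, Module.Injective A (C.P i)) (hX : C.IsHomExact X) (k : ℕ) (i : ℤ) :
    ExtVanishes A X (ker (C.d i)) (k + 1) := by
  have h := hC.isShortExact_toCycles
  induction k generalizing i with
  | zero =>
    have hinj := Submodule.injective_subtype (ker (C.d (i + 1)))
    refine ((h i).extVanishes_one_iff_surjective_compRight (.of_injective (hI i) 0)).2 ?_
    exact (exact_comp_iff_surjective (exact_compRight (exact_subtype_ker_map _) hinj)
      (compRight_injective hinj)).1 (hX i)
  | succ k ih =>
    exact (h i).extVanishes_covariant₁ (ih (i + 1)) (.of_injective (hI i) (k + 1))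

theorem IsExact.extVanishes_ker_of_hasClassCoresolution (hC : C.IsExact)
    (hI : ∀ i, Module.Injective A (C.P i)) {n : ℕ} {X : ModuleCat.{u} A}
    (hX : HasClassCoresolution A (fun E => C.IsHomExact E) n X) (k : ℕ) (i : ℤ) :
    ExtVanishes A X (ker (C.d i)) (k + 1) := by
  induction n generalizing X k with
  | zero => exact hC.extVanishes_ker_of_isHomExact hI hX k i
  | succ n ih =>
    obtain ⟨m, hE, hK⟩ := hX
    exact (IsShortExact.range_mkQ m.inj).extVanishes_contravariant₁
      (hC.extVanishes_ker_of_isHomExact hI hE k i) (ih hK (k + 1))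

end ZComplex

theorem HasClassCoresolution.mono {A : Type u} [Ring A] {𝒞 𝒟 : ModuleCat.{u} A → Prop}
    (h : ∀ X, 𝒞 X → 𝒟 X) {n : ℕ} {X : ModuleCat.{u} A} (hX : HasClassCoresolution A 𝒞 n X) :
    HasClassCoresolution A 𝒟 n X := by
  induction n generalizing X with
  | zero => exact h X hX
  | succ n ih =>
    obtain ⟨m, hE, hK⟩ := hX
    exact ⟨m, h _ hE, ih hK⟩

section GorensteinInjective

variable {S R : Type u} [Ring S] [Ring R] {T : Type u} [AddCommGroup T] [Module S T]
  [Module Rᵐᵒᵖ T] [SMulCommClass S Rᵐᵒᵖ T]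

theorem InBassClass.ker_of_isExact {C : ZComplex Rᵐᵒᵖ} (hC : C.IsExact)
    (hP : ∀ i, InBassClass S R T (C.P i))
    (hT : ∀ k i, ExtVanishes Rᵐᵒᵖ T (ker (C.d i)) (k + 1)) (i : ℤ) :
    InBassClass S R T (ker (C.d i)) := by
  have extP i := (inBassClass_iff.1 (hP i)).1
  have torP i := (inBassClass_iff.1 (hP i)).2.1
  have bijP i := (inBassClass_iff.1 (hP i)).2.2
  have h := hC.isShortExact_toCycles
  have hh i := (h i).homMap (S := S)
    (((h i).extVanishes_one_iff_surjective_compRight (extP i 0)).1 (hT 0 i))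
  have inj : ∀ i, Injective (evalTranspose S R T (ker (C.d i))) :=
    (Equiv.addRight (1 : ℤ)).forall_congr_right.1 fun i =>
      .of_comp (f := lcomp ℤ _ (homMap S T (hC.toCycles i)))
        ((bijP i).1.comp (characterMap_injective (h i).surjective))
  have surj : ∀ i, Surjective (evalTranspose S R T (ker (C.d i))) :=
    (Equiv.addRight (1 : ℤ)).forall_congr_right.1 fun i =>
      surjective_of_surjective_of_injective_of_left_exact
        ((characterMap (hC.toCycles i)).restrictScalars ℤ)
        ((characterMap (ker (C.d i)).subtype).restrictScalars ℤ)
        (lcomp ℤ _ (homMap S T (hC.toCycles i))) (lcomp ℤ _ (homMap S T (ker (C.d i)).subtype))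
        (evalTranspose S R T _) (evalTranspose S R T _) (evalTranspose S R T _) rfl rfl
        (h i).characterMap.exact (exact_lcomp (hh i).exact (hh i).surjective)
        (bijP i).2 (inj i) (lcomp_injective (hh i).surjective)
  have tor (k : ℕ) :
      ∀ i, ExtVanishes Sᵐᵒᵖ (T →ₗ[Rᵐᵒᵖ] ker (C.d i)) (CharacterModule T) (k + 1) := by
    induction k with
    | zero =>
      exact (Equiv.addRight (1 : ℤ)).forall_congr_right.1 fun i =>
        ((hh i).extVanishes_one_iff_surjective_lcomp (torP i 0)).2 <|
          .of_comp (g := evalTranspose S R T (C.P i))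
            ((surj i).comp (characterMap_surjective (h i).injective))
    | succ k ih =>
      exact (Equiv.addRight (1 : ℤ)).forall_congr_right.1 fun i =>
        (hh i).extVanishes_contravariant₃ (ih i) (torP i (k + 1))
  exact inBassClass_iff.2 ⟨fun k => hT k i, fun k => tor k i, inj i, surj i⟩

theorem InBassClass.of_isGorensteinInjective (hW : IsLeftWakamatsuTilting S R T)
    (hT : (∃ n, ProjDimLE Rᵐᵒᵖ T n) ∨ (∃ n, InjDimLE Rᵐᵒᵖ T n)) {M : Type u} [AddCommGroup M]
    [Module Rᵐᵒᵖ M] (hM : IsGorensteinInjective Rᵐᵒᵖ M) : InBassClass S R T M := by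
  obtain ⟨C, hI, hC, hHom, ⟨e⟩⟩ := hM
  have hext : ∀ k i, ExtVanishes Rᵐᵒᵖ T (ker (C.d i)) (k + 1) := by
    rcases hT with ⟨n, hn⟩ | ⟨n, hn⟩
    · exact hC.extVanishes_ker_of_projDimLE hI hn
    · exact hC.extVanishes_ker_of_hasClassCoresolution hI (hn.mono fun E hE => hHom E hE)
  have hP i : InBassClass S R T (C.P i) := .of_injective hW (hI i)
  have hker := InBassClass.ker_of_isExact hC hP hext
  have h := hC.isShortExact_toCycles 0
  exact .of_isShortExact (h.comp_equiv e)
    ((h.extVanishes_one_iff_surjective_compRight ((inBassClass_iff.1 (hP 0)).1 0)).1 (hext 0 0))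
    (hP 0) (hker 1)

theorem InBassClass.of_hasClassCoresolution (hT : IsLeftTensorlyFaithful S T) {n : ℕ}
    {M : ModuleCat.{u} Rᵐᵒᵖ} (hM : HasClassCoresolution Rᵐᵒᵖ (fun E => InBassClass S R T E) n M) :
    InBassClass S R T M := by
  induction n generalizing M with
  | zero => exact hM
  | succ n ih =>
    obtain ⟨m, hE, hK⟩ := hM
    have h := IsShortExact.range_mkQ m.inj
    refine .of_isShortExact h ?_ hE (ih hK)
    exact hT.surjective_homMap h.surjective (inBassClass_iff.1 hE).2.2.1
      (inBassClass_iff.1 (ih hK)).2.2.2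

theorem finite_Gid_mem_bass_general (hW : IsLeftWakamatsuTilting S R T)
    (htf : IsLeftTensorlyFaithful S T) {M : Type u} [AddCommGroup M] [Module Rᵐᵒᵖ M]
    (hM : ∃ n, GidLE Rᵐᵒᵖ M n)
    (hT : (∃ n, ProjDimLE Rᵐᵒᵖ T n) ∨ (∃ n, InjDimLE Rᵐᵒᵖ T n)) : InBassClass S R T M := by
  obtain ⟨n, hn⟩ := hM
  exact .of_hasClassCoresolution htf (M := ModuleCat.of Rᵐᵒᵖ M)
    (hn.mono fun _ hE => .of_isGorensteinInjective hW hT hE)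

end GorensteinInjective

/-- Let `T` be a tensorly faithful Wakamatsu tilting `(S,R)`-bimodule and
`M` a right `R`-module of finite Gorenstein injective dimension. If either `pd(T_R) < ∞` or
`id(T_R) < ∞`, then `M ∈ ℬ_T(R)`. -/
theorem finite_Gid_mem_bass
    (S R : Type u) [Ring S] [Ring R]
    (T : Type u) [AddCommGroup T] [Module S T] [Module Rᵐᵒᵖ T] [SMulCommClass S Rᵐᵒᵖ T]
    (hW : IsWakamatsuTilting S R T) (htf : IsTensorlyFaithful S R T)
    (M : Type u) [AddCommGroup M] [Module Rᵐᵒᵖ M] (hM : ∃ n, GidLE Rᵐᵒᵖ M n)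
    (hT : (∃ n, ProjDimLE Rᵐᵒᵖ T n) ∨ (∃ n, InjDimLE Rᵐᵒᵖ T n)) :
    InBassClass S R T M :=
  finite_Gid_mem_bass_general ⟨hW.fgProjResS, hW.bijR, hW.extS⟩ htf.2 hM hT
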